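/- arXiv:2505.22384 — 3 statements merged into one kernel-verified Lean document; each statement's English description precedes it below -/
import Mathlib

section
/- Let P be a 𝒞-partition of maximum value of a finite edge-weighted simple graph G. Then P is Nash-stable: for every vertex u, letting C_i denote the part of P containing u, and for every part C_j of P with |C_j| < 𝒞, the total weight of the edges joining u to vertices of C_i is at least the total weight of the edges joining u to vertices of C_j. -/
open scoped Classical

/-- The weight contributed by a single part `Q`: total weight of edges of `G`
with both endpoints in `Q`. -/
noncomputable def partVal {V : Type*} [DecidableEq V] (G : SimpleGraph V)
    (w : Sym2 V → ℕ) (Q : Finset V) : ℕ :=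
  ∑ e ∈ Q.sym2.filter (fun e => e ∈ G.edgeSet), w e

/-- The value of a partition `P` of the vertex set of `G`. -/
noncomputable def pVal {V : Type*} [Fintype V] [DecidableEq V] (G : SimpleGraph V)
    (w : Sym2 V → ℕ) (P : Finpartition (Finset.univ : Finset V)) : ℕ :=
  ∑ Q ∈ P.parts, partVal G w Q

/-!
Moving a vertex `u` into a part `Q` of `P` gives a partition of value
`∑ R ∈ P.parts, internalWeight (R.erase u) + weightTo u Q`, in which only the last term depends on
`Q`. For `Q` the part already containing `u` the move changes nothing, so this is the value of `P`
itself; comparing it with the value of the move into a part with room left, optimality cancels down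
to the Nash inequality.
-/

section Reassign

variable {V : Type*} [DecidableEq V]

/-- What becomes of the part `R` of a partition when the vertex `u` leaves its own part and joins
the part `Q`. -/
def reassign (u : V) (Q R : Finset V) : Finset V :=
  if R = Q then insert u R else R.erase u

theorem reassign_self (u : V) (Q : Finset V) : reassign u Q Q = insert u Q :=
  if_pos rfl

theorem reassign_of_ne {u : V} {Q R : Finset V} (h : R ≠ Q) : reassign u Q R = R.erase u :=
  if_neg h

theorem reassign_subset_insert (u : V) (Q R : Finset V) : reassign u Q R ⊆ insert u R := by
  unfold reassign
  split_ifs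
  · exact Finset.Subset.rfl
  · exact (Finset.erase_subset u R).trans (Finset.subset_insert u R)

theorem erase_subset_reassign (u : V) (Q R : Finset V) : R.erase u ⊆ reassign u Q R := by
  unfold reassign
  split_ifs
  · exact (Finset.erase_subset u R).trans (Finset.subset_insert u R)
  · exact Finset.Subset.rfl

theorem mem_reassign {u : V} {Q R : Finset V} : u ∈ reassign u Q R ↔ R = Q := by
  unfold reassign
  split_ifs with h <;> simp [h]

theorem disjoint_reassign {u : V} {Q R S : Finset V} (hRS : Disjoint R S) (hne : R ≠ S) :
    Disjoint (reassign u Q R) (reassign u Q S) := by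
  rw [Finset.disjoint_left]
  intro v hvR hvS
  by_cases hv : v = u
  · subst hv
    exact hne ((mem_reassign.1 hvR).trans (mem_reassign.1 hvS).symm)
  · exact Finset.disjoint_left.1 hRS
      (Finset.mem_of_mem_insert_of_ne (reassign_subset_insert u Q R hvR) hv)
      (Finset.mem_of_mem_insert_of_ne (reassign_subset_insert u Q S hvS) hv)

theorem card_reassign_le {u : V} {Q R : Finset V} {C : ℕ} (hR : R.card ≤ C) (hQ : Q.card < C) :
    (reassign u Q R).card ≤ C := by
  unfold reassign
  split_ifs with h
  · exact (Finset.card_insert_le u R).trans (h ▸ hQ)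
  · exact Finset.card_erase_le.trans hR

variable {s : Finset V} (P : Finpartition s) {u : V} {Q : Finset V}

theorem pairwiseDisjoint_reassign (u : V) (Q : Finset V) :
    (P.parts : Set (Finset V)).PairwiseDisjoint (reassign u Q) :=
  fun _ hR _ hS hne => disjoint_reassign (P.disjoint hR hS hne) hne

theorem sup_reassign (hu : u ∈ s) (hQ : Q ∈ P.parts) : P.parts.sup (reassign u Q) = s := by
  refine le_antisymm (Finset.sup_le fun R hR => ?_) fun v hv => Finset.mem_sup.2 ?_
  · exact (reassign_subset_insert u Q R).trans (Finset.insert_subset hu (P.subset hR))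
  · by_cases hvu : v = u
    · exact ⟨Q, hQ, hvu ▸ mem_reassign.2 rfl⟩
    · obtain ⟨R, hR, hvR⟩ := P.exists_mem hv
      exact ⟨R, hR, erase_subset_reassign u Q R (Finset.mem_erase.2 ⟨hvu, hvR⟩)⟩

/-- The partition obtained from `P` by moving the vertex `u` into the part `Q`. The part that `u`
leaves is dropped if it becomes empty, since a `Finpartition` has no empty parts. -/
def moveTo (hu : u ∈ s) (hQ : Q ∈ P.parts) : Finpartition s :=
  Finpartition.ofErase (P.parts.image (reassign u Q))
    (pairwiseDisjoint_reassign P u Q).supIndep.image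
    (by rw [Finset.sup_image, Function.id_comp, sup_reassign P hu hQ])

theorem parts_moveTo (hu : u ∈ s) (hQ : Q ∈ P.parts) :
    (moveTo P hu hQ).parts = (P.parts.image (reassign u Q)).erase ∅ :=
  rfl

theorem card_le_of_mem_parts_moveTo {C : ℕ} (hP : ∀ R ∈ P.parts, R.card ≤ C) (hu : u ∈ s)
    (hQ : Q ∈ P.parts) (hQC : Q.card < C) : ∀ R ∈ (moveTo P hu hQ).parts, R.card ≤ C := by
  intro R hR
  obtain ⟨S, hS, rfl⟩ := Finset.mem_image.1 (Finset.mem_of_mem_erase hR)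
  exact card_reassign_le (hP S hS) hQC

theorem moveTo_eq_self (hu : u ∈ s) (hQ : Q ∈ P.parts) (huQ : u ∈ Q) : moveTo P hu hQ = P := by
  have reassign_eq : ∀ R ∈ P.parts, reassign u Q R = R := by
    intro R hR
    by_cases h : R = Q
    · rw [h, reassign_self, Finset.insert_eq_of_mem huQ]
    · have huR : u ∉ R := fun huR => h (P.eq_of_mem_parts hR hQ huR huQ)
      rw [reassign_of_ne h, Finset.erase_eq_of_notMem huR]
  apply Finpartition.ext
  rw [parts_moveTo, Finset.image_congr reassign_eq, Finset.image_id',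
    Finset.erase_eq_of_notMem P.empty_notMem_parts]

theorem sum_parts_moveTo {M : Type*} [AddCommMonoid M] {f : Finset V → M} (hf : f ∅ = 0)
    (hu : u ∈ s) (hQ : Q ∈ P.parts) :
    ∑ R ∈ (moveTo P hu hQ).parts, f R = ∑ R ∈ P.parts, f (reassign u Q R) := by
  rw [parts_moveTo, Finset.sum_erase _ hf,
    Finset.sum_image_of_disjoint hf (pairwiseDisjoint_reassign P u Q)]

end Reassign

section Weight

variable {V M : Type*} [AddCommMonoid M] (G : SimpleGraph V) (w : Sym2 V → M)

/-- The total weight of the edges of `G` inside `Q`: the notion `partVal` for weights in an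
arbitrary additive commutative monoid. -/
noncomputable def internalWeight (Q : Finset V) : M :=
  ∑ e ∈ Q.sym2 with e ∈ G.edgeSet, w e

/-- The total weight of the edges of `G` joining the vertex `u` to `Q`, that is, the utility of `u`
for the part `Q`. -/
noncomputable def weightTo (u : V) (Q : Finset V) : M :=
  ∑ v ∈ Q with G.Adj u v, w s(u, v)

theorem internalWeight_empty : internalWeight G w ∅ = 0 := by
  simp [internalWeight]

theorem internalWeight_cons {u : V} {Q : Finset V} (hu : u ∉ Q) :
    internalWeight G w (Q.cons u hu) = weightTo G w u Q + internalWeight G w Q := by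
  simp only [internalWeight, weightTo, Finset.sum_filter, Finset.sym2_cons, Finset.sum_disjUnion,
    Finset.sum_map, Finset.sum_cons, Sym2.mkEmbedding_apply, SimpleGraph.mem_edgeSet, G.irrefl,
    if_false, zero_add]

variable [DecidableEq V]

theorem weightTo_erase (u : V) (Q : Finset V) :
    weightTo G w u (Q.erase u) = weightTo G w u Q := by
  simp only [weightTo, Finset.sum_filter]
  exact Finset.sum_erase Q (if_neg G.irrefl)

theorem internalWeight_insert (u : V) (Q : Finset V) :
    internalWeight G w (insert u Q) = weightTo G w u Q + internalWeight G w (Q.erase u) := by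
  have insert_eq_cons : insert u Q = (Q.erase u).cons u (Finset.notMem_erase u Q) := by
    rw [Finset.cons_eq_insert]
    grind
  rw [insert_eq_cons, internalWeight_cons, weightTo_erase]

theorem sum_internalWeight_moveTo {s : Finset V} (P : Finpartition s) {u : V} {Q : Finset V}
    (hu : u ∈ s) (hQ : Q ∈ P.parts) :
    ∑ R ∈ (moveTo P hu hQ).parts, internalWeight G w R =
      ∑ R ∈ P.parts, internalWeight G w (R.erase u) + weightTo G w u Q :=
  calc
    ∑ R ∈ (moveTo P hu hQ).parts, internalWeight G w R
    _ = ∑ R ∈ P.parts, internalWeight G w (reassign u Q R) :=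
      sum_parts_moveTo P (internalWeight_empty G w) hu hQ
    _ = ∑ R ∈ P.parts, (internalWeight G w (R.erase u) + if R = Q then weightTo G w u R else 0) :=
      Finset.sum_congr rfl fun R _ => by
        unfold reassign
        split_ifs
        · rw [internalWeight_insert, add_comm]
        · rw [add_zero]
    _ = ∑ R ∈ P.parts, internalWeight G w (R.erase u) + weightTo G w u Q := by
      rw [Finset.sum_add_distrib, Finset.sum_ite_eq_of_mem' _ _ _ hQ]

end Weight

theorem stmt0_general {V M : Type*} [DecidableEq V] [AddCommMonoid M] [LE M] [AddLeftReflectLE M]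
    (G : SimpleGraph V) (w : Sym2 V → M) (C : ℕ) {s : Finset V} (P : Finpartition s)
    (hP : ∀ Q ∈ P.parts, Q.card ≤ C)
    (hopt : ∀ P' : Finpartition s, (∀ Q ∈ P'.parts, Q.card ≤ C) →
      ∑ Q ∈ P'.parts, internalWeight G w Q ≤ ∑ Q ∈ P.parts, internalWeight G w Q) :
    ∀ u : V, ∀ Ci ∈ P.parts, u ∈ Ci → ∀ Cj ∈ P.parts, Cj.card < C →
      weightTo G w u Cj ≤ weightTo G w u Ci := by
  intro u Ci hCi huCi Cj hCj hCjC
  have hu : u ∈ s := P.subset hCi huCi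
  have not_better := hopt (moveTo P hu hCj) (card_le_of_mem_parts_moveTo P hP hu hCj hCjC)
  have value_self := sum_internalWeight_moveTo G w P hu hCi
  rw [moveTo_eq_self P hu hCi huCi] at value_self
  rw [sum_internalWeight_moveTo, value_self] at not_better
  exact le_of_add_le_add_left not_better

/-- An optimal 𝒞-partition is Nash-stable. -/
theorem stmt0 {V : Type*} [Fintype V] [DecidableEq V] (G : SimpleGraph V)
    (w : Sym2 V → ℕ) (C : ℕ) (hC : 1 ≤ C)
    (P : Finpartition (Finset.univ : Finset V))
    (hP : ∀ Q ∈ P.parts, Q.card ≤ C)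
    (hopt : ∀ P' : Finpartition (Finset.univ : Finset V),
      (∀ Q ∈ P'.parts, Q.card ≤ C) → pVal G w P' ≤ pVal G w P) :
    ∀ u : V, ∀ Ci ∈ P.parts, u ∈ Ci → ∀ Cj ∈ P.parts, Cj.card < C →
      ∑ v ∈ Cj.filter (fun v => G.Adj u v), w s(u, v) ≤
        ∑ v ∈ Ci.filter (fun v => G.Adj u v), w s(u, v) :=
  stmt0_general G w C P hP hopt
end

section
/- Let G be a finite edge-weighted simple graph with vertex set V, U a vertex cover of G, I = V ∖ U, 𝒞 ≥ 1, and let P' = {C'_1, …, C'_p} be a partition of U into nonempty parts each of size at most 𝒞. Say that a 𝒞-partition P of G extends P' if the nonempty sets among {Q ∩ U : Q ∈ P} are exactly C'_1, …, C'_p. For y ∈ I and i ∈ {1, …, p} put ω(i, y) = Σ_{u ∈ C'_i, uy ∈ E(G)} w(uy). Then the maximum of v(P) over all 𝒞-partitions P of G extending P' equals v(P') + M, where v(P') is the total weight of edges of G with both endpoints in a common part C'_i, and M is the maximum, over all partial functions f from I to {1, …, p} such that |f⁻¹(i)| ≤ 𝒞 − |C'_i| for every i, of Σ_{y ∈ dom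 f} ω(f(y), y). -/
open scoped Classical

/-!
A partition `P` extending the partition `C'` of the vertex cover `U` yields the map sending a vertex
`y` of `I = V \ U` to the block `C' i` contained in the part of `y`, if there is one. As `I` is
independent, every edge inside a part lies inside some `C' i` or joins some `y ∈ I` to the block of
its part, so the value of `P` is the value of `C'` plus the gain of this map, and the size bound on
the parts meeting `U` is the capacity bound on the map. Conversely, a map respecting the capacities
arises from the partition that adds to each `C' i` the vertices sent to it and leaves the others as
singletons.
-/

section

open Finset Function

section Value

variable {V : Type*} {G : SimpleGraph V} {w : Sym2 V → ℕ}

/-- The weight `ω(T, y)` of the edges joining the vertex `y` to the set `T`. -/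
noncomputable def gain (G : SimpleGraph V) (w : Sym2 V → ℕ) (T : Finset V) (y : V) : ℕ :=
  ∑ u ∈ T with G.Adj u y, w s(u, y)

/-- The objective `∑ ω(f y, y)` of a partial assignment `f` of the vertices of `I` to the blocks
`C' i`; the value `none` stands for a vertex outside the domain. -/
noncomputable def totalGain {ι : Type*} (G : SimpleGraph V) (w : Sym2 V → ℕ) (I : Finset V)
    (C' : ι → Finset V) (f : V → Option ι) : ℕ :=
  ∑ y ∈ I, (f y).elim 0 fun i => gain G w (C' i) y

@[simp]
theorem gain_empty (y : V) : gain G w ∅ y = 0 := by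
  simp [gain]

variable [DecidableEq V]

@[simp]
theorem partVal_empty : partVal G w ∅ = 0 := by
  simp [partVal]

theorem gain_union_of_not_adj {T R : Finset V} {y : V} (hR : ∀ u ∈ R, ¬G.Adj u y) :
    gain G w (T ∪ R) y = gain G w T y := by
  rw [gain, filter_union, filter_false_of_mem hR, union_empty, gain]

theorem partVal_insert {Q : Finset V} {y : V} (hy : y ∉ Q) :
    partVal G w (insert y Q) = partVal G w Q + gain G w Q y := by
  rw [← cons_eq_insert y Q hy]
  simp only [partVal, gain, sum_filter, sym2_cons, sum_disjUnion, sum_map, sum_cons,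
    Sym2.mkEmbedding_apply, SimpleGraph.mem_edgeSet, SimpleGraph.irrefl, if_false, zero_add]
  simp only [add_comm, G.adj_comm y, Sym2.eq_swap (a := y)]

theorem partVal_union_of_isIndepSet {T R : Finset V} (hTR : Disjoint T R)
    (hR : G.IsIndepSet (R : Set V)) :
    partVal G w (T ∪ R) = partVal G w T + ∑ y ∈ R, gain G w T y := by
  induction R using Finset.induction_on with
  | empty => simp
  | insert y R hyR ih =>
    rw [disjoint_insert_right] at hTR
    have hnadj : ∀ u ∈ R, ¬G.Adj u y := fun u hu =>
      hR (by simp [hu]) (by simp) (ne_of_mem_of_not_mem hu hyR)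
    have hRindep : G.IsIndepSet (R : Set V) := hR.mono (by simp)
    rw [union_insert, partVal_insert (by simp [hTR.1, hyR]), gain_union_of_not_adj hnadj,
      ih hTR.2 hRindep, sum_insert hyR, add_assoc, add_comm (gain G w T y)]

theorem partVal_eq_partVal_inter_add_sum_gain {U : Finset V} (hU : G.IsVertexCover (U : Set V))
    (Q : Finset V) :
    partVal G w Q = partVal G w (Q ∩ U) + ∑ y ∈ Q \ U, gain G w (Q ∩ U) y := by
  have hindep : G.IsIndepSet ((Q \ U : Finset V) : Set V) :=
    (SimpleGraph.isIndepSet_compl_iff_isVertexCover.2 hU).mono (by simp [Set.sdiff_eq])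
  rw [← partVal_union_of_isIndepSet (disjoint_sdiff_inter Q U).symm hindep, union_comm,
    sdiff_union_inter]

theorem sum_parts_sum_eq_sum_part {M : Type*} [AddCommMonoid M] {s : Finset V}
    (P : Finpartition s) (F : Finset V → V → M) :
    ∑ Q ∈ P.parts, ∑ y ∈ Q, F Q y = ∑ y ∈ s, F (P.part y) y := by
  have hpart : ∀ Q ∈ P.parts, ∑ y ∈ Q, F Q y = ∑ y ∈ Q, F (P.part y) y := fun Q hQ =>
    sum_congr rfl fun y hy => by rw [P.part_eq_of_mem hQ hy]
  exact (sum_congr rfl hpart).trans <|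
    (sum_biUnion P.disjoint).symm.trans <| sum_congr P.biUnion_parts fun _ _ => rfl

theorem sum_partVal_eq_sum_partVal_inter_add_sum_gain {U s : Finset V}
    (hU : G.IsVertexCover (U : Set V)) (P : Finpartition s) :
    ∑ Q ∈ P.parts, partVal G w Q =
      ∑ Q ∈ P.parts, partVal G w (Q ∩ U) + ∑ y ∈ s \ U, gain G w (P.part y ∩ U) y := by
  rw [sum_congr rfl fun Q _ => partVal_eq_partVal_inter_add_sum_gain hU Q, sum_add_distrib]
  simp only [sdiff_eq_filter, sum_filter]
  rw [sum_parts_sum_eq_sum_part P fun Q y => if y ∉ U then gain G w (Q ∩ U) y else 0]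

end Value

section Extension

variable {V ι : Type*} [DecidableEq V] {s U : Finset V} {P : Finpartition s} {C' : ι → Finset V}
  {f : V → Option ι}

/-- The partition `P` extends the family `C'` of blocks of `U`: the nonempty traces on `U` of the
parts of `P` are exactly the `C' i`. -/
structure Extends (P : Finpartition s) (U : Finset V) (C' : ι → Finset V) : Prop where
  exists_inter_eq : ∀ Q ∈ P.parts, (Q ∩ U).Nonempty → ∃ i, Q ∩ U = C' i
  exists_mem_parts : ∀ i, ∃ Q ∈ P.parts, Q ∩ U = C' i

theorem Extends.sum_parts_inter [Fintype ι] {M : Type*} [AddCommMonoid M] (hP : Extends P U C')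
    (hne : ∀ i, (C' i).Nonempty) (hdisj : Pairwise (Disjoint on C')) {F : Finset V → M}
    (hF : F ∅ = 0) : ∑ Q ∈ P.parts, F (Q ∩ U) = ∑ i, F (C' i) := by
  choose q hq hqU using hP.exists_mem_parts
  have hq_inj : Injective q := fun i j hij => by
    by_contra hij'
    have h := hdisj hij'
    rw [onFun, ← hqU i, hij, hqU j, disjoint_self] at h
    exact (hne j).ne_empty h
  refine (sum_of_injOn q hq_inj.injOn (fun i _ => hq i) (fun Q hQ hQq => ?_) fun i _ => ?_).symm
  · obtain hempty | hQU := (Q ∩ U).eq_empty_or_nonempty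
    · rw [hempty, hF]
    · obtain ⟨i, hi⟩ := hP.exists_inter_eq Q hQ hQU
      obtain ⟨x, hx⟩ := hQU
      have hxq : x ∈ q i := mem_of_mem_inter_left (hqU i ▸ hi ▸ hx)
      exact absurd ⟨i, by simp, P.eq_of_mem_parts (hq i) hQ hxq (mem_of_mem_inter_left hx)⟩ hQq
  · rw [hqU i]

/-- The map `f` sends each vertex outside `U` to the block `C' i` that its part traces on `U`,
and to `none` if this trace is empty. -/
def IsTraceMap (P : Finpartition s) (U : Finset V) (C' : ι → Finset V) (f : V → Option ι) : Prop :=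
  ∀ y ∈ s \ U, P.part y ∩ U = (f y).elim ∅ C'

theorem Extends.exists_isTraceMap (hP : Extends P U C') :
    ∃ f : V → Option ι, (∀ y, f y ≠ none → y ∈ s \ U) ∧ IsTraceMap P U C' f := by
  have h : ∀ y, ∃ o : Option ι,
      (o ≠ none → y ∈ s \ U) ∧ (y ∈ s \ U → P.part y ∩ U = o.elim ∅ C') := by
    intro y
    by_cases hy : y ∈ s \ U ∧ (P.part y ∩ U).Nonempty
    · obtain ⟨i, hi⟩ := hP.exists_inter_eq _ (P.part_mem.2 (mem_sdiff.1 hy.1).1) hy.2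
      exact ⟨some i, fun _ => hy.1, fun _ => hi⟩
    · exact ⟨none, by simp, fun hyU => not_nonempty_iff_eq_empty.1 fun hne => hy ⟨hyU, hne⟩⟩
  choose f hsupp htrace using h
  exact ⟨f, hsupp, htrace⟩

theorem Extends.sum_partVal_eq [Fintype ι] {G : SimpleGraph V} {w : Sym2 V → ℕ}
    (hP : Extends P U C') (hf : IsTraceMap P U C' f) (hU : G.IsVertexCover (U : Set V))
    (hne : ∀ i, (C' i).Nonempty) (hdisj : Pairwise (Disjoint on C')) :
    ∑ Q ∈ P.parts, partVal G w Q =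
      ∑ i, partVal G w (C' i) + totalGain G w (s \ U) C' f := by
  rw [sum_partVal_eq_sum_partVal_inter_add_sum_gain hU,
    hP.sum_parts_inter hne hdisj partVal_empty, totalGain]
  congr 1
  refine sum_congr rfl fun y hy => ?_
  rw [hf y hy]
  cases f y <;> simp

theorem Extends.card_filter_eq_some_le [DecidableEq ι] {C : ℕ} (hP : Extends P U C')
    (hf : IsTraceMap P U C' f) (hne : ∀ i, (C' i).Nonempty) (hC : ∀ Q ∈ P.parts, #Q ≤ C) (i : ι) :
    #{y ∈ s \ U | f y = some i} ≤ C - #(C' i) := by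
  obtain ⟨Q, hQ, hQU⟩ := hP.exists_mem_parts i
  obtain ⟨x, hx⟩ := hne i
  have hsub : {y ∈ s \ U | f y = some i} ⊆ Q \ U := by
    intro y hy
    obtain ⟨hyI, hfy⟩ := mem_filter.1 hy
    obtain ⟨hys, hyU⟩ := mem_sdiff.1 hyI
    have htrace : P.part y ∩ U = C' i := by rw [hf y hyI, hfy, Option.elim_some]
    have hpart : P.part y = Q := P.eq_of_mem_parts (P.part_mem.2 hys) hQ
      (mem_of_mem_inter_left (htrace ▸ hx)) (mem_of_mem_inter_left (hQU ▸ hx))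
    exact mem_sdiff.2 ⟨hpart ▸ P.mem_part hys, hyU⟩
  calc #{y ∈ s \ U | f y = some i} ≤ #(Q \ U) := card_le_card hsub
    _ = #Q - #(C' i) := by rw [card_sdiff, inter_comm, hQU]
    _ ≤ C - #(C' i) := Nat.sub_le_sub_right (hC Q hQ) _

end Extension

section BlockPartition

variable {V ι : Type*} [DecidableEq V] [Fintype ι] {s U : Finset V} {C' D : ι → Finset V}
  {f : V → Option ι} {hne : ∀ i, (D i).Nonempty} {hdisj : Pairwise (Disjoint on D)}
  {hsub : ∀ i, D i ⊆ s}

/-- The blocks `D i` together with the singletons of the elements of `s` outside all blocks; the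
parts of `blockPartition`. -/
def blockParts (s : Finset V) (D : ι → Finset V) : Finset (Finset V) :=
  univ.image D ∪ {y ∈ s | ∀ i, y ∉ D i}.image singleton

theorem mem_blockParts {Q : Finset V} :
    Q ∈ blockParts s D ↔ (∃ i, D i = Q) ∨ ∃ y, (y ∈ s ∧ ∀ i, y ∉ D i) ∧ {y} = Q := by
  simp only [blockParts, mem_union, mem_image, mem_univ, true_and, mem_filter]

theorem existsUnique_mem_blockParts (hdisj : Pairwise (Disjoint on D)) {x : V} (hx : x ∈ s) :
    ∃! Q ∈ blockParts s D, x ∈ Q := by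
  by_cases hxD : ∃ i, x ∈ D i
  · obtain ⟨i, hi⟩ := hxD
    refine ⟨D i, ⟨mem_blockParts.2 (.inl ⟨i, rfl⟩), hi⟩, fun Q ⟨hQ, hxQ⟩ => ?_⟩
    obtain ⟨j, rfl⟩ | ⟨y, ⟨-, hyD⟩, rfl⟩ := mem_blockParts.1 hQ
    · rw [hdisj.eq (not_disjoint_iff.2 ⟨x, hxQ, hi⟩)]
    · exact absurd (mem_singleton.1 hxQ ▸ hi) (hyD i)
  · refine ⟨{x}, ⟨mem_blockParts.2 (.inr ⟨x, ⟨hx, not_exists.1 hxD⟩, rfl⟩),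
      mem_singleton_self x⟩, fun Q ⟨hQ, hxQ⟩ => ?_⟩
    obtain ⟨j, rfl⟩ | ⟨y, -, rfl⟩ := mem_blockParts.1 hQ
    · exact absurd ⟨j, hxQ⟩ hxD
    · rw [mem_singleton.1 hxQ]

theorem subset_of_mem_blockParts (hsub : ∀ i, D i ⊆ s) {Q : Finset V} (hQ : Q ∈ blockParts s D) :
    Q ⊆ s := by
  obtain ⟨i, rfl⟩ | ⟨y, ⟨hy, -⟩, rfl⟩ := mem_blockParts.1 hQ
  · exact hsub i
  · exact singleton_subset_iff.2 hy

theorem empty_notMem_blockParts (hne : ∀ i, (D i).Nonempty) : ∅ ∉ blockParts s D := by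
  simp [mem_blockParts, (hne _).ne_empty]

/-- The partition of `s` into the blocks `D i` and the singletons of the elements of `s` outside
all blocks. -/
def blockPartition (D : ι → Finset V) (hne : ∀ i, (D i).Nonempty)
    (hdisj : Pairwise (Disjoint on D)) (hsub : ∀ i, D i ⊆ s) : Finpartition s :=
  .ofExistsUnique (blockParts s D) (fun _ => subset_of_mem_blockParts hsub)
    (fun _ => existsUnique_mem_blockParts hdisj) (empty_notMem_blockParts hne)

theorem part_blockPartition_of_mem {i : ι} {y : V} (hy : y ∈ D i) :
    (blockPartition D hne hdisj hsub).part y = D i :=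
  Finpartition.part_eq_of_mem _ (mem_blockParts.2 (.inl ⟨i, rfl⟩)) hy

theorem part_blockPartition_of_forall_notMem {y : V} (hys : y ∈ s) (hy : ∀ i, y ∉ D i) :
    (blockPartition D hne hdisj hsub).part y = {y} :=
  Finpartition.part_eq_of_mem _ (mem_blockParts.2 (.inr ⟨y, ⟨hys, hy⟩, rfl⟩))
    (mem_singleton_self y)

theorem card_le_of_mem_parts_blockPartition {C : ℕ} (hC : 1 ≤ C) (hcard : ∀ i, #(D i) ≤ C)
    {Q : Finset V} (hQ : Q ∈ (blockPartition D hne hdisj hsub).parts) : #Q ≤ C := by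
  obtain ⟨i, rfl⟩ | ⟨y, -, rfl⟩ := mem_blockParts.1 hQ
  · exact hcard i
  · rwa [card_singleton]

theorem extends_blockPartition (hDU : ∀ i, D i ∩ U = C' i) (hcover : ∀ u ∈ U, ∃ i, u ∈ D i) :
    Extends (blockPartition D hne hdisj hsub) U C' where
  exists_inter_eq Q hQ hQU := by
    obtain ⟨i, rfl⟩ | ⟨y, ⟨-, hyD⟩, rfl⟩ := mem_blockParts.1 hQ
    · exact ⟨i, hDU i⟩
    · obtain ⟨x, hx⟩ := hQU
      obtain ⟨hxy, hxU⟩ := mem_inter.1 hx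
      obtain ⟨i, hi⟩ := hcover x hxU
      exact absurd (mem_singleton.1 hxy ▸ hi) (hyD i)
  exists_mem_parts i := ⟨D i, mem_blockParts.2 (.inl ⟨i, rfl⟩), hDU i⟩

theorem isTraceMap_blockPartition (hDU : ∀ i, D i ∩ U = C' i)
    (hf : ∀ y ∈ s \ U, ∀ i, y ∈ D i ↔ f y = some i) :
    IsTraceMap (blockPartition D hne hdisj hsub) U C' f := by
  intro y hy
  obtain ⟨hys, hyU⟩ := mem_sdiff.1 hy
  cases hfy : f y with
  | none =>
    have hyD : ∀ i, y ∉ D i := fun i => by simp [hf y hy, hfy]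
    rw [part_blockPartition_of_forall_notMem hys hyD, singleton_inter_of_notMem hyU,
      Option.elim_none]
  | some i => rw [part_blockPartition_of_mem ((hf y hy i).2 hfy), hDU, Option.elim_some]

end BlockPartition

section Assignment

variable {V ι : Type*} [DecidableEq V] [DecidableEq ι] {s U : Finset V} {C' : ι → Finset V}
  {f : V → Option ι}

/-- The block `C' i` enlarged by the vertices of `I` that `f` assigns to it. -/
def enlargedBlock (C' : ι → Finset V) (I : Finset V) (f : V → Option ι) (i : ι) : Finset V :=
  C' i ∪ {y ∈ I | f y = some i}

theorem mem_enlargedBlock_of_mem_sdiff (hsub : ∀ i, C' i ⊆ U) {y : V} (hy : y ∈ s \ U) (i : ι) :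
    y ∈ enlargedBlock C' (s \ U) f i ↔ f y = some i := by
  have hyC' : y ∉ C' i := fun h => (mem_sdiff.1 hy).2 (hsub i h)
  rw [enlargedBlock, mem_union, mem_filter]
  simp only [hyC', hy, true_and, false_or]

theorem enlargedBlock_inter (hsub : ∀ i, C' i ⊆ U) (i : ι) :
    enlargedBlock C' (s \ U) f i ∩ U = C' i := by
  have hI : Disjoint ({y ∈ s \ U | f y = some i}) U :=
    sdiff_disjoint.mono_left (filter_subset _ _)
  rw [enlargedBlock, union_inter_distrib_right, inter_eq_left.2 (hsub i),
    disjoint_iff_inter_eq_empty.1 hI, union_empty]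

theorem pairwise_disjoint_enlargedBlock (hsub : ∀ i, C' i ⊆ U)
    (hdisj : Pairwise (Disjoint on C')) :
    Pairwise (Disjoint on enlargedBlock C' (s \ U) f) := by
  intro i j hij
  have hC'I : ∀ k l, Disjoint (C' k) {y ∈ s \ U | f y = some l} := fun k l =>
    disjoint_sdiff.mono (hsub k) (filter_subset _ _)
  have hII : Disjoint {y ∈ s \ U | f y = some i} {y ∈ s \ U | f y = some j} :=
    disjoint_filter.2 fun y _ hi hj => hij (Option.some.inj (hi.symm.trans hj))
  simp only [onFun, enlargedBlock, disjoint_union_left, disjoint_union_right]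
  exact ⟨⟨hdisj hij, (hC'I j i).symm⟩, hC'I i j, hII⟩

theorem card_enlargedBlock_le {I : Finset V} {C : ℕ} {i : ι} (hcard : #(C' i) ≤ C)
    (hf : #{y ∈ I | f y = some i} ≤ C - #(C' i)) : #(enlargedBlock C' I f i) ≤ C :=
  calc #(enlargedBlock C' I f i) ≤ #(C' i) + #{y ∈ I | f y = some i} := card_union_le _ _
    _ ≤ #(C' i) + (C - #(C' i)) := Nat.add_le_add_left hf _
    _ = C := Nat.add_sub_of_le hcard

theorem exists_extends_isTraceMap_of_card_filter_le [Finite ι] {C : ℕ} (hC : 1 ≤ C)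
    (hUs : U ⊆ s) (hne : ∀ i, (C' i).Nonempty) (hsub : ∀ i, C' i ⊆ U)
    (hdisj : Pairwise (Disjoint on C')) (hcover : ∀ u ∈ U, ∃ i, u ∈ C' i)
    (hcard : ∀ i, #(C' i) ≤ C) (hf : ∀ i, #{y ∈ s \ U | f y = some i} ≤ C - #(C' i)) :
    ∃ P : Finpartition s, (∀ Q ∈ P.parts, #Q ≤ C) ∧ Extends P U C' ∧ IsTraceMap P U C' f := by
  have := Fintype.ofFinite ι
  have hC'D : ∀ i, C' i ⊆ enlargedBlock C' (s \ U) f i := fun _ => subset_union_left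
  have hDs : ∀ i, enlargedBlock C' (s \ U) f i ⊆ s := fun i =>
    union_subset ((hsub i).trans hUs) ((filter_subset _ _).trans sdiff_subset)
  refine ⟨blockPartition (enlargedBlock C' (s \ U) f) (fun i => (hne i).mono (hC'D i))
      (pairwise_disjoint_enlargedBlock hsub hdisj) hDs, fun Q => ?_, ?_, ?_⟩
  · exact card_le_of_mem_parts_blockPartition hC fun i => card_enlargedBlock_le (hcard i) (hf i)
  · exact extends_blockPartition (enlargedBlock_inter hsub) fun u hu =>
      (hcover u hu).imp fun i hi => hC'D i hi
  · exact isTraceMap_blockPartition (enlargedBlock_inter hsub) fun y =>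
      mem_enlargedBlock_of_mem_sdiff hsub

end Assignment

theorem sSup_image_const_add (a : ℕ) {A : Set ℕ} (hne : A.Nonempty) (hbdd : BddAbove A) :
    sSup ((a + ·) '' A) = a + sSup A :=
  (Monotone.map_csSup_of_continuousAt continuous_of_discreteTopology.continuousAt
    (add_right_mono (a := a)) hne hbdd).symm

end

/-- Given a partition `C'` of a vertex cover `U` into nonempty parts of size at
most `𝒞`, the maximum value of a 𝒞-partition of `G` extending it equals the
value of `C'` plus the maximum total gain over capacity-respecting partial
assignments of the vertices of `I = V ∖ U` to the parts. -/
theorem stmt5 {V : Type*} [Fintype V] [DecidableEq V] (G : SimpleGraph V)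
    (w : Sym2 V → ℕ) (C : ℕ) (hC : 1 ≤ C)
    (U : Finset V) (hU : ∀ u v : V, G.Adj u v → u ∈ U ∨ v ∈ U)
    (p : ℕ) (C' : Fin p → Finset V)
    (hne : ∀ i, (C' i).Nonempty)
    (hsub : ∀ i, C' i ⊆ U)
    (hdisj : ∀ i j, i ≠ j → Disjoint (C' i) (C' j))
    (hcover : ∀ u ∈ U, ∃ i, u ∈ C' i)
    (hcard : ∀ i, (C' i).card ≤ C) :
    sSup {t : ℕ | ∃ P : Finpartition (Finset.univ : Finset V),
        (∀ Q ∈ P.parts, Q.card ≤ C) ∧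
        (∀ Q ∈ P.parts, (Q ∩ U).Nonempty → ∃ i, Q ∩ U = C' i) ∧
        (∀ i, ∃ Q ∈ P.parts, Q ∩ U = C' i) ∧
        pVal G w P = t} =
    (∑ i, partVal G w (C' i)) +
      sSup {t : ℕ | ∃ f : V → Option (Fin p),
        (∀ y : V, f y ≠ none → y ∈ Finset.univ \ U) ∧
        (∀ i : Fin p,
          ((Finset.univ \ U).filter (fun y => f y = some i)).card ≤ C - (C' i).card) ∧
        (∑ y ∈ Finset.univ \ U,
          (f y).elim 0 (fun i => ∑ u ∈ (C' i).filter (fun u => G.Adj u y), w s(u, y))) = t} := by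
  have hcov : G.IsVertexCover (U : Set V) := fun u v => hU u v
  have hpd : Pairwise (Function.onFun Disjoint C') := fun i j => hdisj i j
  refine (congrArg sSup (Set.ext fun t => ⟨?_, ?_⟩)).trans
    (sSup_image_const_add _ ⟨_, fun _ => none, by simp, by simp, rfl⟩
      ((Set.finite_range (totalGain G w (Finset.univ \ U) C')).bddAbove.mono ?_))
  · rintro ⟨P, hPC, hinter, hparts, rfl⟩
    have hP : Extends P U C' := ⟨hinter, hparts⟩
    obtain ⟨f, hsupp, hf⟩ := hP.exists_isTraceMap
    exact ⟨_, ⟨f, hsupp, hP.card_filter_eq_some_le hf hne hPC, rfl⟩,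
      (hP.sum_partVal_eq hf hcov hne hpd).symm⟩
  · rintro ⟨_, ⟨f, -, hcap, rfl⟩, rfl⟩
    obtain ⟨P, hPC, hP, hf⟩ := exists_extends_isTraceMap_of_card_filter_le hC
      (Finset.subset_univ U) hne hsub hpd hcover hcard hcap
    exact ⟨P, hPC, hP.exists_inter_eq, hP.exists_mem_parts, hP.sum_partVal_eq hf hcov hne hpd⟩
  · rintro _ ⟨f, -, -, rfl⟩
    exact ⟨f, rfl⟩
end

section
/- Let g : ℕ → ℕ satisfy g(0) = 0, g(1) = 1, g(2) = 3, g(3) = 5 and g(4) = 8, and fix p, x ∈ ℕ with x ≤ 4p. Over all functions f : Fin p → ℕ with f(i) ≤ 4 for every i and Σ_{i} f(i) = x, the maximum of Σ_{i} g(f(i)) equals 2x if 4 divides x, and 2x − 1 otherwise. Moreover, every maximizing f has no index i with f(i) ∈ {1, 2, 3} when 4 divides x, and exactly one such index otherwise. -/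
/-!
Take gadgets of capacity `c` in which `k ≤ c` connectors gain `a * k` edges, minus one exactly when
`0 < k < c`; the hardness construction has `c = 4` and `a = 2`. The total gain is then `a * x` minus
the number of partially filled gadgets, so maximizing it means minimizing that number. Modulo `c`
only the partially filled gadgets contribute to `x`, hence there is at least one of them unless
`c ∣ x`. Filling the gadgets one after another leaves at most one partially filled, and when there
is exactly one, its load is nonzero modulo `c`, which rules out `c ∣ x`.
-/

open Finset

section PartiallyFilled

variable {ι : Type*} [Fintype ι] {c : ℕ} {f : ι → ℕ}

/-- The gadgets `i` of capacity `c` that the distribution `f` leaves neither empty nor full. They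
are the ones at which the gain falls short of the linear bound. -/
def partiallyFilled (c : ℕ) (f : ι → ℕ) : Finset ι :=
  {i | f i ∈ Ioo 0 c}

theorem mem_partiallyFilled {i : ι} :
    i ∈ partiallyFilled c f ↔ 0 < f i ∧ f i < c := by
  simp [partiallyFilled]

theorem sum_modEq_sum_partiallyFilled (hf : ∀ i, f i ≤ c) :
    ∑ i, f i ≡ ∑ i ∈ partiallyFilled c f, f i [MOD c] := by
  classical
  have dvd_rest : c ∣ ∑ i ∈ (partiallyFilled c f)ᶜ, f i := by
    refine dvd_sum fun i hi => ?_
    rw [mem_compl, mem_partiallyFilled] at hi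
    have hfi := hf i
    obtain h | h : f i = 0 ∨ f i = c := by omega
    · exact h ▸ dvd_zero c
    · exact h.symm.dvd
  rw [← sum_add_sum_compl (partiallyFilled c f)]
  exact (Nat.modEq_zero_iff_dvd.mpr dvd_rest).add_left _

theorem ite_dvd_sum_le_card_partiallyFilled (hf : ∀ i, f i ≤ c) :
    (if c ∣ ∑ i, f i then 0 else 1) ≤ #(partiallyFilled c f) := by
  split_ifs with h
  · exact Nat.zero_le _
  · rw [Nat.one_le_iff_ne_zero, Ne, card_eq_zero]
    intro hempty
    exact h (Nat.modEq_zero_iff_dvd.mp (by simpa [hempty] using sum_modEq_sum_partiallyFilled hf))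

theorem card_partiallyFilled_eq_ite (hf : ∀ i, f i ≤ c) (hcard : #(partiallyFilled c f) ≤ 1) :
    #(partiallyFilled c f) = if c ∣ ∑ i, f i then 0 else 1 := by
  refine le_antisymm ?_ (ite_dvd_sum_le_card_partiallyFilled hf)
  split_ifs with h
  · by_contra! hpos
    obtain ⟨i, hi⟩ := card_eq_one.mp (le_antisymm hcard hpos)
    have hmod : ∑ j, f j ≡ f i [MOD c] := by
      simpa [hi] using sum_modEq_sum_partiallyFilled hf
    obtain ⟨hfi_pos, hfi_lt⟩ := mem_partiallyFilled.mp (hi ▸ mem_singleton_self i)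
    exact Nat.not_dvd_of_pos_of_lt hfi_pos hfi_lt ((hmod.dvd_iff dvd_rfl).mp h)
  · exact hcard

end PartiallyFilled

section GreedyFill

/-- The load of gadget `n` when `x` connectors are put into gadgets `0, 1, 2, …` of capacity `c`,
each being filled up before the next one is opened. Truncated subtraction makes the load `0` once
the connectors are used up. -/
def greedyFill (c x n : ℕ) : ℕ :=
  min c (x - c * n)

theorem sum_range_greedyFill (c x p : ℕ) :
    ∑ n ∈ range p, greedyFill c x n = min x (c * p) := by
  induction p with
  | zero => simp
  | succ p ih => rw [sum_range_succ, ih, greedyFill, mul_add_one]; omega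

theorem eq_div_of_greedyFill_mem_Ioo {c x n : ℕ} (h : greedyFill c x n ∈ Ioo 0 c) :
    n = x / c := by
  rw [mem_Ioo, greedyFill] at h
  refine (Nat.div_eq_of_lt_le ?_ ?_).symm
  · rw [mul_comm]; omega
  · rw [mul_comm, mul_add_one]; omega

theorem exists_card_partiallyFilled_le_one {ι : Type*} [Fintype ι] {c x : ℕ}
    (hx : x ≤ c * Fintype.card ι) :
    ∃ f : ι → ℕ, (∀ i, f i ≤ c) ∧ ∑ i, f i = x ∧ #(partiallyFilled c f) ≤ 1 := by
  let e := Fintype.equivFin ι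
  refine ⟨fun i => greedyFill c x (e i), fun i => min_le_left _ _, ?_, ?_⟩
  · rw [e.sum_comp fun n => greedyFill c x n, Fin.sum_univ_eq_sum_range, sum_range_greedyFill,
      min_eq_left hx]
  · have index_eq : ∀ i ∈ partiallyFilled c (fun i => greedyFill c x (e i)), (e i : ℕ) = x / c :=
      fun i hi => eq_div_of_greedyFill_mem_Ioo ((mem_filter_univ i).mp hi)
    exact card_le_one.mpr fun i hi j hj =>
      e.injective (Fin.ext ((index_eq i hi).trans (index_eq j hj).symm))

end GreedyFill

section Gain

variable {ι : Type*} [Fintype ι] {g : ℕ → ℕ} {a c : ℕ} {f : ι → ℕ}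

theorem sum_gain_add_card_partiallyFilled
    (hg : ∀ k ≤ c, g k + (if k ∈ Ioo 0 c then 1 else 0) = a * k) (hf : ∀ i, f i ≤ c) :
    ∑ i, g (f i) + #(partiallyFilled c f) = a * ∑ i, f i := by
  rw [partiallyFilled, card_filter, ← sum_add_distrib, mul_sum]
  exact sum_congr rfl fun i _ => hg (f i) (hf i)

theorem sum_gain_le
    (hg : ∀ k ≤ c, g k + (if k ∈ Ioo 0 c then 1 else 0) = a * k) (hf : ∀ i, f i ≤ c) :
    ∑ i, g (f i) ≤ if c ∣ ∑ i, f i then a * ∑ i, f i else a * ∑ i, f i - 1 := by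
  have htotal := sum_gain_add_card_partiallyFilled hg hf
  have hmin := ite_dvd_sum_le_card_partiallyFilled hf
  split_ifs at hmin ⊢ <;> omega

theorem sum_gain_eq_iff_card_partiallyFilled_eq
    (hg : ∀ k ≤ c, g k + (if k ∈ Ioo 0 c then 1 else 0) = a * k) (hf : ∀ i, f i ≤ c) :
    (∑ i, g (f i) = if c ∣ ∑ i, f i then a * ∑ i, f i else a * ∑ i, f i - 1) ↔
      #(partiallyFilled c f) = if c ∣ ∑ i, f i then 0 else 1 := by
  have htotal := sum_gain_add_card_partiallyFilled hg hf
  have hmin := ite_dvd_sum_le_card_partiallyFilled hf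
  split_ifs at hmin ⊢ <;> omega

end Gain

theorem stmt11_general {ι : Type*} [Fintype ι] (g : ℕ → ℕ) (a c : ℕ)
    (hg : ∀ k ≤ c, g k + (if k ∈ Ioo 0 c then 1 else 0) = a * k)
    (x : ℕ) (hx : x ≤ c * Fintype.card ι) :
    IsGreatest {t : ℕ | ∃ f : ι → ℕ, (∀ i, f i ≤ c) ∧ (∑ i, f i = x) ∧ t = ∑ i, g (f i)}
      (if c ∣ x then a * x else a * x - 1) ∧
    ∀ f : ι → ℕ, (∀ i, f i ≤ c) → (∑ i, f i = x) →
      ((∑ i, g (f i) = if c ∣ x then a * x else a * x - 1) ↔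
        #(partiallyFilled c f) = if c ∣ x then 0 else 1) := by
  refine ⟨⟨?_, ?_⟩, ?_⟩
  · obtain ⟨f, hf, rfl, hcard⟩ := exists_card_partiallyFilled_le_one hx
    have hopt := card_partiallyFilled_eq_ite hf hcard
    exact ⟨f, hf, rfl, ((sum_gain_eq_iff_card_partiallyFilled_eq hg hf).mpr hopt).symm⟩
  · rintro _ ⟨f, hf, rfl, rfl⟩
    exact sum_gain_le hg hf
  · rintro f hf rfl
    exact sum_gain_eq_iff_card_partiallyFilled_eq hg hf

theorem partiallyFilled_four {ι : Type*} [Fintype ι] (f : ι → ℕ) :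
    partiallyFilled 4 f = univ.filter (fun i => f i = 1 ∨ f i = 2 ∨ f i = 3) := by
  ext i
  simp only [mem_partiallyFilled, mem_filter_univ]
  omega

theorem gain_add_ite_eq_two_mul {g : ℕ → ℕ} (hg0 : g 0 = 0) (hg1 : g 1 = 1) (hg2 : g 2 = 3)
    (hg3 : g 3 = 5) (hg4 : g 4 = 8) :
    ∀ k ≤ 4, g k + (if k ∈ Ioo 0 4 then 1 else 0) = 2 * k := by
  intro k hk
  interval_cases k <;> simp [hg0, hg1, hg2, hg3, hg4]

/-- Optimal distribution of `x` connector vertices among `p` edge gadgets,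
where placing `i` of the four connectors of a gadget with it gains `g i` edges
(`g 0 = 0`, `g 1 = 1`, `g 2 = 3`, `g 3 = 5`, `g 4 = 8`): the maximum total gain
is `2x` when `4 ∣ x` and `2x − 1` otherwise, and a maximizing distribution has
no gadget receiving `1`, `2` or `3` connectors when `4 ∣ x`, and exactly one
such gadget otherwise. -/
theorem stmt11 (g : ℕ → ℕ) (hg0 : g 0 = 0) (hg1 : g 1 = 1) (hg2 : g 2 = 3)
    (hg3 : g 3 = 5) (hg4 : g 4 = 8) (p x : ℕ) (hx : x ≤ 4 * p) :
    IsGreatest {t : ℕ | ∃ f : Fin p → ℕ,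
        (∀ i, f i ≤ 4) ∧ (∑ i, f i = x) ∧ t = ∑ i, g (f i)}
      (if 4 ∣ x then 2 * x else 2 * x - 1) ∧
    ∀ f : Fin p → ℕ, (∀ i, f i ≤ 4) → (∑ i, f i = x) →
      (∑ i, g (f i) = if 4 ∣ x then 2 * x else 2 * x - 1) →
      (Finset.univ.filter (fun i => f i = 1 ∨ f i = 2 ∨ f i = 3)).card =
        if 4 ∣ x then 0 else 1 := by
  have h := stmt11_general g 2 4 (gain_add_ite_eq_two_mul hg0 hg1 hg2 hg3 hg4) x
    ((Fintype.card_fin p).symm ▸ hx)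
  exact ⟨h.1, fun f hf hs hmax => partiallyFilled_four f ▸ (h.2 f hf hs).mp hmax⟩
end
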